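/- Let n ≥ 3 be odd and let D_{2n} be the dihedral group of order 2n. Then the characteristic polynomial of the adjacency matrix of the order super commuting graph Δ^o(D_{2n}) is χ(A(Δ^o(D_{2n})), x) = (x + 1)^{2n−3} · [x³ − (2n − 3)x² + (n² − 5n + 3)x + (2n² − 4n + 1)]. Moreover, Δ^o(D_{2n}) has eigenvalue −1 with multiplicity 2n − 3, and the three remaining simple eigenvalues α < β < γ satisfy −2 < α < −1, n − 2 < β < n − 1, and n < γ < n + 1. -/

import Mathlib

/-!
For odd `n`, rotations of `D_{2n}` have odd order and reflections have order `2`. If an element of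
odd order `k > 1` commuted with one of order `2`, their product would have order `2k`, which no
element of `D_{2n}` has, so the identity is the only rotation adjacent to a reflection.
Hence `Δ^o(D_{2n})` arises from the path rotation — identity — reflection, the star `K_{1,2}`, by
replacing its vertices with cliques of sizes `n - 1`, `1` and `n`.

If a graph `Γ` arises from a graph `I` in this way, then `A(Γ) + 1` repeats the rows and columns of
`A(I) + 1`, so it factors through the vertex set of `I`. Exchanging the two factors shows that, up
to a power of `X + 1`, the characteristic polynomial of `A(Γ)` is that of the quotient matrix
`(A(I) + 1) D - 1`, where `D` is the diagonal matrix of clique sizes. Here the quotient matrix is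
`3 × 3`, and sign changes locate the roots of its characteristic polynomial.
-/

open Polynomial

noncomputable section
open scoped Classical

/-- The adjacency matrix (over ℝ) of a finite simple graph. -/
def adjMat {V : Type*} [Fintype V] (Γ : SimpleGraph V) : Matrix V V ℝ :=
  fun u v => if Γ.Adj u v then 1 else 0

/-- The Laplacian matrix `D − A` of a finite simple graph, where `D` is the diagonal
matrix of vertex degrees. -/
def lapMat {V : Type*} [Fintype V] (Γ : SimpleGraph V) : Matrix V V ℝ :=
  Matrix.diagonal (fun v => ((Finset.univ.filter fun u => Γ.Adj v u).card : ℝ)) - adjMat Γ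

/-- The `R`-super graph of `Γ`: two distinct vertices are adjacent iff they are
`R`-equivalent or some members of their respective `R`-classes are adjacent in `Γ`. -/
def superGraph {V : Type*} (Γ : SimpleGraph V) (R : Setoid V) : SimpleGraph V :=
  SimpleGraph.fromRel fun u v =>
    R.r u v ∨ ∃ u' v', R.r u u' ∧ R.r v v' ∧ Γ.Adj u' v'

/-- The `R`-compressed graph of `Γ`, on the set of `R`-classes: two distinct classes are
adjacent iff some vertex of one is adjacent in `Γ` to some vertex of the other. -/
def compressedGraph {V : Type*} (Γ : SimpleGraph V) (R : Setoid V) :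
    SimpleGraph (Quotient R) :=
  SimpleGraph.fromRel fun c d => ∃ x y, Quotient.mk R x = c ∧ Quotient.mk R y = d ∧ Γ.Adj x y

/-- The generalized join `I[K_{n i}]` of complete graphs along the graph `I`:
the vertex `i` of `I` is replaced by the complete graph on `Fin (n i)`, and all edges are
put between the `i`-th and `j`-th complete graphs whenever `i` and `j` are adjacent in `I`. -/
def genJoinK {ι : Type*} (I : SimpleGraph ι) (n : ι → ℕ) : SimpleGraph (Σ i, Fin (n i)) :=
  SimpleGraph.fromRel fun a b => a.1 = b.1 ∨ I.Adj a.1 b.1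

/-- The star graph `K_{1,k-1}` on `Fin k`, whose central vertex is the one with value `0`. -/
def starGraph (k : ℕ) : SimpleGraph (Fin k) :=
  SimpleGraph.fromRel fun a _b => a.val = 0

/-- The order super commuting graph `Δ^o(G)`: distinct `x, y` are adjacent iff
`o(x) = o(y)` or some distinct commuting `x', y'` satisfy `o(x') = o(x)` and `o(y') = o(y)`. -/
def orderSuper (G : Type*) [Group G] : SimpleGraph G :=
  SimpleGraph.fromRel fun x y =>
    orderOf x = orderOf y ∨
      ∃ x' y' : G, x' ≠ y' ∧ x' * y' = y' * x' ∧ orderOf x' = orderOf x ∧ orderOf y' = orderOf y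

/-- The conjugacy super commuting graph `Δ^c(G)`: distinct `x, y` are adjacent iff
`x` is conjugate to `y` or some distinct commuting `x', y'` are conjugate to `x` and `y`
respectively. -/
def conjSuper (G : Type*) [Group G] : SimpleGraph G :=
  SimpleGraph.fromRel fun x y =>
    IsConj x y ∨ ∃ x' y' : G, x' ≠ y' ∧ x' * y' = y' * x' ∧ IsConj x x' ∧ IsConj y y'

open scoped Finset

lemma eq_prod_X_sub_C_of_monic_of_isRoot {R : Type*} [CommRing R] [IsDomain R] {p : R[X]}
    (hp : p.Monic) {s : Finset R} (hs : p.natDegree = #s) (hroot : ∀ a ∈ s, p.IsRoot a) :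
    p = ∏ a ∈ s, (X - C a) := by
  refine eq_of_degree_le_of_eval_finset_eq s ?_ ?_ ?_ ?_
  · rw [degree_eq_natDegree hp.ne_zero, hs]
  · rw [degree_eq_natDegree hp.ne_zero, hs, degree_prod]
    simp
  · rw [hp, monic_prod_X_sub_C]
  · intro a ha
    rw [hroot a ha, eval_prod, Finset.prod_eq_zero ha (by simp)]

lemma exists_isRoot_mem_Ioo {p : ℝ[X]} {a b : ℝ} (hab : a ≤ b) (h : p.eval a * p.eval b < 0) :
    ∃ c ∈ Set.Ioo a b, p.IsRoot c := by
  rcases mul_neg_iff.1 h with ⟨ha, hb⟩ | ⟨ha, hb⟩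
  exacts [intermediate_value_Ioo' hab p.continuousOn ⟨hb, ha⟩,
    intermediate_value_Ioo hab p.continuousOn ⟨ha, hb⟩]

section Blowup

variable {V ι : Type*}

/-- The blow-up of the graph `I` along `f : V → ι`: each vertex `i` of `I` is replaced by a clique
on the fibre of `f` over `i`, and fibres over adjacent vertices are completely joined. The
generalized join `genJoinK I n` is the case `f = Sigma.fst`. -/
def cliqueBlowup (I : SimpleGraph ι) (f : V → ι) : SimpleGraph V :=
  SimpleGraph.fromRel fun u v => f u = f v ∨ I.Adj (f u) (f v)

lemma cliqueBlowup_adj (I : SimpleGraph ι) (f : V → ι) (u v : V) :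
    (cliqueBlowup I f).Adj u v ↔ u ≠ v ∧ (f u = f v ∨ I.Adj (f u) (f v)) := by
  rw [cliqueBlowup, SimpleGraph.fromRel_adj, eq_comm (a := f v), I.adj_comm (f v), or_self]

variable [Fintype V] [Fintype ι] [DecidableEq V] [DecidableEq ι]

lemma charpoly_submatrix_self {R : Type*} [CommRing R] (M : Matrix ι ι R) (f : V → ι)
    (hcard : Fintype.card ι ≤ Fintype.card V) :
    (M.submatrix f f).charpoly = X ^ (Fintype.card V - Fintype.card ι) *
      (M * Matrix.diagonal fun i => (#{v | f v = i} : R)).charpoly := by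
  have hfactor : M.submatrix f f =
      (1 : Matrix ι ι R).submatrix f id * M.submatrix id f := by
    ext u v
    simp [Matrix.mul_apply, Matrix.one_apply]
  have hswap : M.submatrix id f * (1 : Matrix ι ι R).submatrix f id =
      M * Matrix.diagonal fun i => (#{v | f v = i} : R) := by
    ext i j
    rw [Matrix.mul_diagonal, Finset.natCast_card_filter, Finset.mul_sum, Matrix.mul_apply]
    refine Finset.sum_congr rfl fun v _ => ?_
    by_cases hv : f v = j <;> simp [Matrix.one_apply, hv]
  rw [hfactor, Matrix.charpoly_mul_comm_of_le _ _ hcard, hswap]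

lemma adjMat_cliqueBlowup (I : SimpleGraph ι) (f : V → ι) :
    adjMat (cliqueBlowup I f) = (adjMat I + 1).submatrix f f - 1 := by
  ext u v
  by_cases huv : u = v
  · simp [huv, adjMat]
  by_cases hf : f u = f v <;> simp [adjMat, cliqueBlowup_adj, huv, hf]

lemma charpoly_adjMat_cliqueBlowup (I : SimpleGraph ι) (f : V → ι)
    (hcard : Fintype.card ι ≤ Fintype.card V) :
    (adjMat (cliqueBlowup I f)).charpoly = (X + 1) ^ (Fintype.card V - Fintype.card ι) *
      ((adjMat I + 1) * Matrix.diagonal (fun i => (#{v | f v = i} : ℝ)) - 1).charpoly := by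
  rw [adjMat_cliqueBlowup, ← map_one (Matrix.scalar V), ← map_one (Matrix.scalar ι),
    Matrix.charpoly_sub_scalar, Matrix.charpoly_sub_scalar, map_one (Matrix.scalar ι),
    charpoly_submatrix_self _ _ hcard]
  simp

end Blowup

section OrderSuper

variable {G : Type*} [Group G] {x y : G}

lemma orderSuper_adj_iff : (orderSuper G).Adj x y ↔ x ≠ y ∧ (orderOf x = orderOf y ∨
    ∃ x' y' : G, x' ≠ y' ∧ Commute x' y' ∧ orderOf x' = orderOf x ∧ orderOf y' = orderOf y) := by
  refine SimpleGraph.fromRel_adj .. |>.trans <| and_congr_right fun _ => or_iff_left_of_imp ?_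
  rintro (h | ⟨y', x', hne, hcomm, hy, hx⟩)
  exacts [.inl h.symm, .inr ⟨x', y', hne.symm, hcomm.symm, hx, hy⟩]

lemma exists_orderOf_eq_mul_of_orderSuper_adj (hadj : (orderSuper G).Adj x y)
    (hcop : (orderOf x).Coprime (orderOf y)) : ∃ z : G, orderOf z = orderOf x * orderOf y := by
  obtain ⟨hne, heq | ⟨x', y', -, hcomm, hx, hy⟩⟩ := orderSuper_adj_iff.1 hadj
  · rw [heq, Nat.coprime_self] at hcop
    rw [hcop, orderOf_eq_one_iff] at heq
    rw [orderOf_eq_one_iff] at hcop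
    exact absurd (heq.trans hcop.symm) hne
  · rw [← hx, ← hy] at hcop ⊢
    exact ⟨x' * y', hcomm.orderOf_mul_eq_mul_orderOf_of_coprime hcop⟩

end OrderSuper

section QuotientCubic

/-- The characteristic polynomial of the quotient matrix of `Δ^o(D_{2n})` for odd `n`, with
a real parameter `m` in place of `n`. -/
def quotientCubic (m : ℝ) : ℝ[X] :=
  X ^ 3 - C (2 * m - 3) * X ^ 2 + C (m ^ 2 - 5 * m + 3) * X + C (2 * m ^ 2 - 4 * m + 1)

lemma adjMat_starGraph_three : adjMat (starGraph 3) = !![0, 1, 1; 1, 0, 0; 1, 0, 0] := by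
  ext a b
  fin_cases a <;> fin_cases b <;> simp [adjMat, starGraph]

lemma charpoly_quotientMatrix (m : ℝ) :
    ((adjMat (starGraph 3) + 1) * Matrix.diagonal ![1, m - 1, m] - 1).charpoly =
      quotientCubic m := by
  have hquot : (adjMat (starGraph 3) + 1) * Matrix.diagonal ![1, m - 1, m] - 1 =
      !![0, m - 1, m; 1, m - 2, 0; 1, 0, m - 1] := by
    ext a b
    rw [adjMat_starGraph_three]
    fin_cases a <;> fin_cases b <;> simp [sub_sub, one_add_one_eq_two]
  calc
    _ = X * (X - C (m - 2)) * (X - C (m - 1)) - C (m - 1) * (X - C (m - 1))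
        - C m * (X - C (m - 2)) := by
      rw [hquot]
      simp [Matrix.charpoly, Matrix.det_fin_three]
    _ = quotientCubic m := by
      simp only [quotientCubic, map_add, map_sub, map_mul, map_pow, map_ofNat, map_one]
      ring

lemma monic_quotientCubic (m : ℝ) : (quotientCubic m).Monic := by
  rw [← charpoly_quotientMatrix]
  exact Matrix.charpoly_monic _

lemma natDegree_quotientCubic (m : ℝ) : (quotientCubic m).natDegree = 3 := by
  rw [← charpoly_quotientMatrix, Matrix.charpoly_natDegree_eq_dim, Fintype.card_fin]

lemma eval_quotientCubic (m x : ℝ) : (quotientCubic m).eval x =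
    x ^ 3 - (2 * m - 3) * x ^ 2 + (m ^ 2 - 5 * m + 3) * x + (2 * m ^ 2 - 4 * m + 1) := by
  simp [quotientCubic]

lemma exists_quotientCubic_eq_prod {m : ℝ} (hm : 1 < m) :
    ∃ α ∈ Set.Ioo (-2 : ℝ) (-1), ∃ β ∈ Set.Ioo (m - 2) (m - 1), ∃ γ ∈ Set.Ioo m (m + 1),
      quotientCubic m = (X - C α) * (X - C β) * (X - C γ) := by
  obtain ⟨α, hα, hrootα⟩ : ∃ α ∈ Set.Ioo (-2 : ℝ) (-1), (quotientCubic m).IsRoot α := by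
    apply exists_isRoot_mem_Ioo (by norm_num)
    have hleft : (quotientCubic m).eval (-2) = -(2 * m + 1) := by
      rw [eval_quotientCubic]; ring
    have hright : (quotientCubic m).eval (-1) = m * (m - 1) := by
      rw [eval_quotientCubic]; ring
    rw [hleft, hright]
    exact mul_neg_of_neg_of_pos (by linarith) (mul_pos (by linarith) (by linarith))
  obtain ⟨β, hβ, hrootβ⟩ : ∃ β ∈ Set.Ioo (m - 2) (m - 1), (quotientCubic m).IsRoot β := by
    apply exists_isRoot_mem_Ioo (by linarith)
    have hleft : (quotientCubic m).eval (m - 2) = m - 1 := by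
      rw [eval_quotientCubic]; ring
    have hright : (quotientCubic m).eval (m - 1) = -m := by
      rw [eval_quotientCubic]; ring
    rw [hleft, hright]
    exact mul_neg_of_pos_of_neg (by linarith) (by linarith)
  obtain ⟨γ, hγ, hrootγ⟩ : ∃ γ ∈ Set.Ioo m (m + 1), (quotientCubic m).IsRoot γ := by
    apply exists_isRoot_mem_Ioo (by linarith)
    have hleft : (quotientCubic m).eval m = -(m - 1) := by
      rw [eval_quotientCubic]; ring
    have hright : (quotientCubic m).eval (m + 1) = m + 8 := by
      rw [eval_quotientCubic]; ring
    rw [hleft, hright]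
    exact mul_neg_of_neg_of_pos (by linarith) (by linarith)
  refine ⟨α, hα, β, hβ, γ, hγ, ?_⟩
  have hαβ : α < β := by linarith [hα.2, hβ.1]
  have hβγ : β < γ := by linarith [hβ.2, hγ.1]
  have hcard : #{α, β, γ} = 3 :=
    Finset.card_eq_three.2 ⟨α, β, γ, hαβ.ne, (hαβ.trans hβγ).ne, hβγ.ne, rfl⟩
  rw [eq_prod_X_sub_C_of_monic_of_isRoot (monic_quotientCubic m)
    ((natDegree_quotientCubic m).trans hcard.symm) (by simp [-IsRoot.def, *])]
  simp [hαβ.ne, hβγ.ne, (hαβ.trans hβγ).ne, mul_assoc]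

end QuotientCubic

section Dihedral

open DihedralGroup

variable {n : ℕ}

lemma odd_orderOf_r (hodd : Odd n) (i : ZMod n) : Odd (orderOf (r i)) :=
  hodd.of_dvd_nat <| orderOf_dvd_of_pow_eq_one <| by simp [r_pow]

lemma orderSuper_r_adj_r (i j : ZMod n) :
    (orderSuper (DihedralGroup n)).Adj (r i) (r j) ↔ i ≠ j := by
  rw [orderSuper_adj_iff, ne_eq, r.injEq, and_iff_left_of_imp]
  exact fun hij => .inr ⟨r i, r j, by simpa using hij, by simp [commute_iff_eq, add_comm], rfl, rfl⟩

lemma orderSuper_sr_adj_sr (i j : ZMod n) :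
    (orderSuper (DihedralGroup n)).Adj (sr i) (sr j) ↔ i ≠ j := by
  simp [orderSuper_adj_iff]

lemma orderSuper_r_adj_sr (hodd : Odd n) (i j : ZMod n) :
    (orderSuper (DihedralGroup n)).Adj (r i) (sr j) ↔ i = 0 := by
  constructor
  · intro hadj
    have hcop : (orderOf (r i)).Coprime (orderOf (sr j)) := by
      rw [orderOf_sr]
      exact (odd_orderOf_r hodd i).coprime_two_right
    obtain ⟨z, hz⟩ := exists_orderOf_eq_mul_of_orderSuper_adj hadj hcop
    rw [orderOf_sr] at hz
    cases z with
    | r k => exact absurd (hz ▸ odd_orderOf_r hodd k) (by simp)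
    | sr k =>
      have hone : orderOf (r i) = 1 := by rw [orderOf_sr] at hz; lia
      rwa [orderOf_eq_one_iff, one_def, r.injEq] at hone
  · rintro rfl
    exact orderSuper_adj_iff.2 ⟨nofun, .inr ⟨1, sr j, nofun, .one_left _, by simp, rfl⟩⟩

/-- The kind of an element of `D_{2n}` as a vertex of `starGraph 3`: the identity is the centre `0`,
the nontrivial rotations form the leaf `1` and the reflections the leaf `2`. -/
def dihedralKind : DihedralGroup n → Fin 3
  | r i => if i = 0 then 0 else 1
  | sr _ => 2

lemma orderSuper_dihedralGroup_eq_cliqueBlowup (hodd : Odd n) :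
    orderSuper (DihedralGroup n) = cliqueBlowup (starGraph 3) dihedralKind := by
  ext x y
  rw [cliqueBlowup_adj]
  cases x with
  | r i =>
    cases y with
    | r j =>
      rw [orderSuper_r_adj_r]
      by_cases hi : i = 0 <;> by_cases hj : j = 0 <;>
        simp [-r_zero, dihedralKind, starGraph, hi, hj]
    | sr j =>
      rw [orderSuper_r_adj_sr hodd]
      by_cases hi : i = 0 <;> simp [-r_zero, dihedralKind, starGraph, hi]
  | sr i =>
    cases y with
    | r j =>
      rw [SimpleGraph.adj_comm, orderSuper_r_adj_sr hodd]
      by_cases hj : j = 0 <;> simp [-r_zero, dihedralKind, starGraph, hj]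
    | sr j => simp [orderSuper_sr_adj_sr, dihedralKind]

lemma sum_dihedralGroup [NeZero n] {M : Type*} [AddCommMonoid M] (f : DihedralGroup n → M) :
    ∑ x, f x = ∑ i, f (r i) + ∑ i, f (sr i) := by
  rw [← equivSum.symm.sum_comp, Fintype.sum_sum_type]
  rfl

lemma card_fiber_dihedralKind [NeZero n] :
    (fun k => (#{x : DihedralGroup n | dihedralKind x = k} : ℝ)) = ![1, (n : ℝ) - 1, n] := by
  ext k
  rw [Finset.natCast_card_filter, sum_dihedralGroup]
  have hcompl (i : ZMod n) : (if i = 0 then 0 else 1 : ℝ) = 1 - if i = 0 then 1 else 0 := by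
    split_ifs <;> simp
  fin_cases k <;> simp [dihedralKind, ite_eq_iff, hcompl]

lemma charpoly_adjMat_orderSuper_dihedralGroup [NeZero n] (hn : 2 ≤ n) (hodd : Odd n) :
    (adjMat (orderSuper (DihedralGroup n))).charpoly =
      (X + 1) ^ (2 * n - 3) * quotientCubic n := by
  rw [orderSuper_dihedralGroup_eq_cliqueBlowup hodd, charpoly_adjMat_cliqueBlowup,
    card_fiber_dihedralKind, charpoly_quotientMatrix, DihedralGroup.card, Fintype.card_fin]
  rw [DihedralGroup.card, Fintype.card_fin]
  lia

end Dihedral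

/-- Adjacency spectrum of the order super commuting graph of the dihedral group `D_{2n}`
for odd `n ≥ 3`: the characteristic polynomial is
`(x+1)^{2n−3} (x³ − (2n−3)x² + (n²−5n+3)x + (2n²−4n+1))`; moreover `−1` is an eigenvalue
of multiplicity `2n−3` and the three remaining simple eigenvalues `α < β < γ` satisfy
`−2 < α < −1`, `n−2 < β < n−1` and `n < γ < n+1`. -/
theorem stmt_8 (n : ℕ) [NeZero n] (hn : 3 ≤ n) (hodd : Odd n) :
    (adjMat (orderSuper (DihedralGroup n))).charpoly =
        (X + 1) ^ (2 * n - 3) *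
          (X ^ 3 - C (2 * (n : ℝ) - 3) * X ^ 2 + C ((n : ℝ) ^ 2 - 5 * n + 3) * X +
            C (2 * (n : ℝ) ^ 2 - 4 * n + 1)) ∧
      ∃ α β γ : ℝ, α < β ∧ β < γ ∧
        (-2 < α ∧ α < -1) ∧ ((n : ℝ) - 2 < β ∧ β < (n : ℝ) - 1) ∧
        ((n : ℝ) < γ ∧ γ < (n : ℝ) + 1) ∧
        (adjMat (orderSuper (DihedralGroup n))).charpoly =
          (X + 1) ^ (2 * n - 3) * ((X - C α) * (X - C β) * (X - C γ)) := by
  have hcharpoly := charpoly_adjMat_orderSuper_dihedralGroup (by lia) hodd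
  have hone : (1 : ℝ) < n := by exact_mod_cast (by lia : 1 < n)
  obtain ⟨α, hα, β, hβ, γ, hγ, hroots⟩ := exists_quotientCubic_eq_prod hone
  refine ⟨hcharpoly, α, β, γ, ?_, ?_, hα, hβ, hγ, hroots ▸ hcharpoly⟩
  · linarith [hα.2, hβ.1]
  · linarith [hβ.2, hγ.1]
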